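/- Let n ≥ 4 be an integer, let η be the admissible reactive profile, set q(z) = n (2κ z η(z) + η(z)²)^{n−1} (2κ z + 2 η(z)) and p₊ = (1 + √(1 + 4nδ(δ+1)))/2. Then the solution h₁ of h₁''(z) = q(z) h₁(z) with h₁(0) = 1 and h₁'(0) = 0 exists on all of [0,∞), is positive with h₁(x) ≥ 1 for every x ≥ 0, and there exists a constant d₁ > 0 such that x^{−p₊} h₁(x) → d₁ as x → ∞. -/

import Mathlib

noncomputable def kap : ℝ := 1 / Real.sqrt Real.pi

noncomputable def del (n : ℕ) : ℝ := ((n : ℝ) + 2) / ((n : ℝ) - 1)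

def IsReactiveProfile (n : ℕ) (η : ℝ → ℝ) : Prop :=
  ContDiffOn ℝ 2 η (Set.Ici 0) ∧
  (∀ z ∈ Set.Ici (0:ℝ), 0 < η z) ∧
  (∀ z ∈ Set.Ici (0:ℝ),
    derivWithin (derivWithin η (Set.Ici 0)) (Set.Ici 0) z
      = (2 * kap * z * η z + (η z) ^ 2) ^ n) ∧
  derivWithin η (Set.Ici 0) 0 = -kap ∧
  Filter.Tendsto η Filter.atTop (nhds 0)

/-- q(z) = n(2κzη(z)+η(z)²)^{n−1}(2κz+2η(z)). -/
noncomputable def qpot (n : ℕ) (η : ℝ → ℝ) (z : ℝ) : ℝ :=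
  (n : ℝ) * (2 * kap * z * η z + (η z) ^ 2) ^ (n - 1) * (2 * kap * z + 2 * η z)

/-- p₊ = (1 + √(1 + 4nδ(δ+1)))/2. -/
noncomputable def pplus (n : ℕ) : ℝ :=
  (1 + Real.sqrt (1 + 4 * (n : ℝ) * del n * (del n + 1))) / 2

/-!
The solution exists on the whole line because the Picard operator of a linear equation contracts a
suitably weighted space of bounded functions, and it stays above its initial value `1` because
`h h'` is nondecreasing.

Its growth is governed by `q z * z ^ 2` at infinity. The equation for `η` is, up to the term `η²`,
invariant under the scalings `η ↦ c ^ δ * η (c * z)`, so the generator `w = z η' + δ η` of these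
scalings satisfies `w'' = q w - n (δ + 1) (2κzη + η²) ^ (n - 1) η²`. The maximum principle gives
`0 ≤ w`, hence `z ^ δ * η z` increases. It is bounded because large multiples of `z ^ (-δ)` are
barriers for `η`, and its limit `C` satisfies `(2κ) ^ n * C ^ (n - 1) = δ (δ + 1)`. A second
barrier, `w ≤ B * z ^ (-(δ + 1))`, makes this convergence `O(1 / z)`, so that
`q z * z ^ 2 = p₊ (p₊ - 1) + O(1 / z)`.

For such a potential the functions `z ^ p + c * z ^ (p - 1)` are sub- and supersolutions for
suitable `c` of either sign. A Wronskian argument shows that the ratio of `h` to the one and the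
ratio of the other to `h` converge, so `z ^ (-p) * h z` has a finite and nonzero limit.
-/

open Set Filter Topology Asymptotics
open scoped BoundedContinuousFunction

lemma antitoneOn_Ici_of_hasDerivAt_nonpos {f f' : ℝ → ℝ} {a : ℝ}
    (hf : ∀ z, a ≤ z → HasDerivAt f (f' z) z) (hf' : ∀ z, a ≤ z → f' z ≤ 0) :
    AntitoneOn f (Ici a) :=
  antitoneOn_of_hasDerivWithinAt_nonpos (convex_Ici a)
    (fun z hz ↦ (hf z hz).continuousAt.continuousWithinAt)
    (fun z hz ↦ (hf z (interior_subset hz)).hasDerivWithinAt)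
    fun z hz ↦ hf' z (interior_subset hz)

lemma monotoneOn_Ici_of_hasDerivAt_nonneg {f f' : ℝ → ℝ} {a : ℝ}
    (hf : ∀ z, a ≤ z → HasDerivAt f (f' z) z) (hf' : ∀ z, a ≤ z → 0 ≤ f' z) :
    MonotoneOn f (Ici a) :=
  monotoneOn_of_hasDerivWithinAt_nonneg (convex_Ici a)
    (fun z hz ↦ (hf z hz).continuousAt.continuousWithinAt)
    (fun z hz ↦ (hf z (interior_subset hz)).hasDerivWithinAt)
    fun z hz ↦ hf' z (interior_subset hz)

/-! ### Global solutions of linear equations -/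

/-- The weight in which the Volterra operator `y ↦ ∫ A y` of the linear equation `y' = A y` has norm
at most `1 / 2`. The hyperbolic cosine, instead of an exponential, makes this hold on both sides of
the origin. -/
noncomputable def volterraWeight {E : Type*} [NormedAddCommGroup E] [NormedSpace ℝ E]
    (A : ℝ → E →L[ℝ] E) (t : ℝ) : ℝ :=
  Real.cosh (2 * ∫ s in (0 : ℝ)..t, ‖A s‖)

namespace volterraWeight

variable {E : Type*} [NormedAddCommGroup E] [NormedSpace ℝ E] {A : ℝ → E →L[ℝ] E}

lemma pos (A : ℝ → E →L[ℝ] E) (t : ℝ) : 0 < volterraWeight A t := Real.cosh_pos _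

lemma one_le (A : ℝ → E →L[ℝ] E) (t : ℝ) : 1 ≤ volterraWeight A t := Real.one_le_cosh _

lemma hasDerivAt_integral_norm (hA : Continuous A) (t : ℝ) :
    HasDerivAt (fun t ↦ ∫ s in (0 : ℝ)..t, ‖A s‖) ‖A t‖ t :=
  hA.norm.integral_hasStrictDerivAt 0 t |>.hasDerivAt

lemma continuous (hA : Continuous A) : Continuous (volterraWeight A) :=
  Real.continuous_cosh.comp <| continuous_const.mul <|
    continuous_iff_continuousAt.2 fun t ↦ (hasDerivAt_integral_norm hA t).continuousAt

lemma integral_norm_mul (hA : Continuous A) (t : ℝ) :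
    ∫ s in (0 : ℝ)..t, ‖A s‖ * volterraWeight A s =
      Real.sinh (2 * ∫ s in (0 : ℝ)..t, ‖A s‖) / 2 := by
  have hderiv (s : ℝ) : HasDerivAt (fun t ↦ Real.sinh (2 * ∫ s in (0 : ℝ)..t, ‖A s‖) / 2)
      (‖A s‖ * volterraWeight A s) s := by
    refine (((hasDerivAt_integral_norm hA s).const_mul 2).sinh.div_const 2).congr_deriv ?_
    rw [volterraWeight]
    ring
  have hcont : Continuous fun s ↦ ‖A s‖ * volterraWeight A s := hA.norm.mul (continuous hA)
  simp [intervalIntegral.integral_eq_sub_of_hasDerivAt (fun s _ ↦ hderiv s)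
    (hcont.intervalIntegrable 0 t)]

lemma norm_integral_le (hA : Continuous A) {u : ℝ → E} {c : ℝ} (hc : 0 ≤ c)
    (hu : ∀ s, ‖u s‖ ≤ c) (t : ℝ) :
    ‖∫ s in (0 : ℝ)..t, A s (volterraWeight A s • u s)‖ ≤ c / 2 * volterraWeight A t := by
  have hle (s : ℝ) : ‖A s (volterraWeight A s • u s)‖ ≤ c * (‖A s‖ * volterraWeight A s) :=
    calc ‖A s (volterraWeight A s • u s)‖ ≤ ‖A s‖ * ‖volterraWeight A s • u s‖ := (A s).le_opNorm _
      _ = ‖A s‖ * (volterraWeight A s * ‖u s‖) := by rw [norm_smul_of_nonneg (pos A s).le]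
      _ ≤ ‖A s‖ * (volterraWeight A s * c) := by gcongr; exacts [(pos A s).le, hu s]
      _ = c * (‖A s‖ * volterraWeight A s) := by ring
  have hcont : Continuous fun s ↦ c * (‖A s‖ * volterraWeight A s) :=
    continuous_const.mul (hA.norm.mul (continuous hA))
  refine (intervalIntegral.norm_integral_le_abs_of_norm_le (.of_forall hle)
    (hcont.intervalIntegrable 0 t)).trans ?_
  rw [intervalIntegral.integral_const_mul, integral_norm_mul hA, abs_mul, abs_of_nonneg hc, abs_div,
    abs_two, Real.abs_sinh, volterraWeight, ← Real.cosh_abs (2 * _), div_mul_eq_mul_div,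
    ← mul_div_assoc]
  gcongr
  exact (Real.sinh_lt_cosh _).le

end volterraWeight

section WeightedPicard

variable {E : Type*} [NormedAddCommGroup E] [NormedSpace ℝ E] {A : ℝ → E →L[ℝ] E}

lemma continuous_apply_volterraWeight_smul (hA : Continuous A) (u : ℝ →ᵇ E) :
    Continuous fun s ↦ A s (volterraWeight A s • u s) :=
  hA.clm_apply ((volterraWeight.continuous hA).smul u.continuous)

lemma hasDerivAt_integral_volterraWeight_smul [CompleteSpace E] (hA : Continuous A) (u : ℝ →ᵇ E)
    (t : ℝ) : HasDerivAt (fun t ↦ ∫ s in (0 : ℝ)..t, A s (volterraWeight A s • u s))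
      (A t (volterraWeight A t • u t)) t :=
  ((continuous_apply_volterraWeight_smul hA u).integral_hasStrictDerivAt 0 t).hasDerivAt

/-- The Picard operator `y ↦ y₀ + ∫ A y` of the equation `y' = A y`, conjugated by the weight:
it acts on `u = y / volterraWeight A`, so that it maps bounded functions to bounded functions. -/
noncomputable def weightedPicard [CompleteSpace E] (hA : Continuous A) (y₀ : E) (u : ℝ →ᵇ E) :
    ℝ →ᵇ E :=
  .ofNormedAddCommGroup
    (fun t ↦ (volterraWeight A t)⁻¹ • (y₀ + ∫ s in (0 : ℝ)..t, A s (volterraWeight A s • u s)))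
    (((volterraWeight.continuous hA).inv₀ fun t ↦ (volterraWeight.pos A t).ne').smul <|
      continuous_const.add <| continuous_iff_continuousAt.2 fun t ↦
        (hasDerivAt_integral_volterraWeight_smul hA u t).continuousAt)
    (‖y₀‖ + ‖u‖ / 2) fun t ↦ by
      rw [norm_smul_of_nonneg (inv_nonneg.2 (volterraWeight.pos A t).le),
        inv_mul_le_iff₀ (volterraWeight.pos A t)]
      nlinarith [norm_add_le y₀ (∫ s in (0 : ℝ)..t, A s (volterraWeight A s • u s)),
        volterraWeight.one_le A t, norm_nonneg y₀,
        volterraWeight.norm_integral_le hA (norm_nonneg u) u.norm_coe_le_norm t]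

lemma weightedPicard_apply [CompleteSpace E] (hA : Continuous A) (y₀ : E) (u : ℝ →ᵇ E) (t : ℝ) :
    weightedPicard hA y₀ u t =
      (volterraWeight A t)⁻¹ • (y₀ + ∫ s in (0 : ℝ)..t, A s (volterraWeight A s • u s)) :=
  rfl

lemma contractingWith_weightedPicard [CompleteSpace E] (hA : Continuous A) (y₀ : E) :
    ContractingWith (1 / 2) (weightedPicard hA y₀) := by
  refine ⟨by norm_num, LipschitzWith.of_dist_le_mul fun u v ↦
    (BoundedContinuousFunction.dist_le (by positivity)).2 fun t ↦ ?_⟩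
  have hsub : weightedPicard hA y₀ u t - weightedPicard hA y₀ v t =
      (volterraWeight A t)⁻¹ • ∫ s in (0 : ℝ)..t, A s (volterraWeight A s • (u - v) s) := by
    simp only [weightedPicard_apply, ← smul_sub, add_sub_add_left_eq_sub,
      BoundedContinuousFunction.sub_apply]
    rw [← intervalIntegral.integral_sub
      ((continuous_apply_volterraWeight_smul hA u).intervalIntegrable 0 t)
      ((continuous_apply_volterraWeight_smul hA v).intervalIntegrable 0 t)]
    simp only [smul_sub, map_sub]
  rw [dist_eq_norm, hsub, norm_smul_of_nonneg (inv_nonneg.2 (volterraWeight.pos A t).le),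
    inv_mul_le_iff₀ (volterraWeight.pos A t), dist_eq_norm]
  refine (volterraWeight.norm_integral_le hA (norm_nonneg (u - v))
    (u - v).norm_coe_le_norm t).trans_eq ?_
  push_cast
  ring

theorem exists_forall_hasDerivAt_clm_apply [CompleteSpace E] (hA : Continuous A) (y₀ : E) :
    ∃ y : ℝ → E, y 0 = y₀ ∧ ∀ t, HasDerivAt y (A t (y t)) t := by
  obtain ⟨u, hu⟩ : ∃ u, weightedPicard hA y₀ u = u :=
    ⟨_, (contractingWith_weightedPicard hA y₀).fixedPoint_isFixedPt⟩
  have hsol (t : ℝ) : volterraWeight A t • u t =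
      y₀ + ∫ s in (0 : ℝ)..t, A s (volterraWeight A s • u s) := by
    conv_lhs => rw [← hu]
    exact smul_inv_smul₀ (volterraWeight.pos A t).ne' _
  refine ⟨fun t ↦ volterraWeight A t • u t, (hsol 0).trans (by simp), fun t ↦ ?_⟩
  exact ((hasDerivAt_integral_volterraWeight_smul hA u t).const_add y₀).congr_of_eventuallyEq
    (.of_forall hsol)

end WeightedPicard

theorem exists_forall_hasDerivAt_second_order {Q : ℝ → ℝ} (hQ : Continuous Q) (a b : ℝ) :
    ∃ h h' : ℝ → ℝ, h 0 = a ∧ h' 0 = b ∧ (∀ t, HasDerivAt h (h' t) t) ∧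
      ∀ t, HasDerivAt h' (Q t * h t) t := by
  let A (t : ℝ) : ℝ × ℝ →L[ℝ] ℝ × ℝ :=
    .inl ℝ ℝ ℝ ∘L .snd ℝ ℝ ℝ + Q t • .inr ℝ ℝ ℝ ∘L .fst ℝ ℝ ℝ
  obtain ⟨y, hy₀, hy⟩ := exists_forall_hasDerivAt_clm_apply (A := A) (by fun_prop) (a, b)
  refine ⟨fun t ↦ (y t).1, fun t ↦ (y t).2, by simp [hy₀], by simp [hy₀], fun t ↦ ?_, fun t ↦ ?_⟩
  · simpa [A] using (hy t).hasFDerivAt.fst.hasDerivAt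
  · simpa [A] using (hy t).hasFDerivAt.snd.hasDerivAt

theorem le_of_second_order_nonneg {q h h' : ℝ → ℝ} (hq : ∀ t, 0 ≤ t → 0 ≤ q t)
    (hh : ∀ t, 0 ≤ t → HasDerivAt h (h' t) t) (hh' : ∀ t, 0 ≤ t → HasDerivAt h' (q t * h t) t)
    (h₀ : 0 < h 0) (h₀' : 0 ≤ h' 0) {t : ℝ} (ht : 0 ≤ t) : h 0 ≤ h t := by
  have hprod : MonotoneOn (fun t ↦ h t * h' t) (Ici 0) :=
    monotoneOn_Ici_of_hasDerivAt_nonneg (fun t ht ↦ (hh t ht).mul (hh' t ht)) fun t ht ↦ by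
      have := hq t ht
      nlinarith [sq_nonneg (h' t), mul_nonneg this (sq_nonneg (h t))]
  have hprod_nonneg {t : ℝ} (ht : 0 ≤ t) : 0 ≤ h t * h' t :=
    (mul_nonneg h₀.le h₀').trans (hprod self_mem_Ici ht ht)
  have hsq : MonotoneOn (fun t ↦ h t ^ 2) (Ici 0) :=
    monotoneOn_Ici_of_hasDerivAt_nonneg (fun t ht ↦ (hh t ht).pow 2) fun t ht ↦ by
      have := hprod_nonneg ht
      norm_num
      linarith
  have hsq_le {t : ℝ} (ht : 0 ≤ t) : h 0 ^ 2 ≤ h t ^ 2 := hsq self_mem_Ici ht ht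
  have hpos : 0 < h t := by
    by_contra! hneg
    have hcont : ContinuousOn h (Icc 0 t) := fun s hs ↦ (hh s hs.1).continuousAt.continuousWithinAt
    obtain ⟨s, hs, hs₀⟩ := intermediate_value_Icc' ht hcont ⟨hneg, h₀.le⟩
    have := hsq_le hs.1
    rw [hs₀] at this
    nlinarith
  exact le_of_sq_le_sq (hsq_le ht) hpos.le

/-! ### The maximum principle on a half-line -/

lemma deriv_deriv_nonpos_of_isLocalMax {f : ℝ → ℝ} {x : ℝ} (hmax : IsLocalMax f x)
    (hf : ContinuousAt f x) : deriv (deriv f) x ≤ 0 := by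
  by_contra! hpos
  have hmin : IsLocalMin f x := isLocalMin_of_deriv_deriv_pos hpos hmax.deriv_eq_zero hf
  have hconst : f =ᶠ[𝓝 x] fun _ ↦ f x := by
    filter_upwards [hmax, hmin] with y h₁ h₂ using h₁.antisymm h₂
  have hzero : deriv (deriv f) x = 0 := by
    rw [hconst.deriv.deriv_eq]
    simp
  exact hpos.ne' hzero

/-- If `f - g` were positive somewhere, it would have a positive interior maximum. -/
theorem le_of_second_deriv_lt_of_lt {f f' f'' g g' g'' : ℝ → ℝ} {a : ℝ}
    (hf : ContinuousOn f (Ici a)) (hg : ContinuousOn g (Ici a))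
    (hf' : ∀ z, a < z → HasDerivAt f (f' z) z) (hg' : ∀ z, a < z → HasDerivAt g (g' z) z)
    (hf'' : ∀ z, a < z → HasDerivAt f' (f'' z) z) (hg'' : ∀ z, a < z → HasDerivAt g' (g'' z) z)
    (hlt : ∀ z, a < z → g z < f z → g'' z < f'' z) (ha : f a ≤ g a)
    (hlim : Tendsto (fun z ↦ f z - g z) atTop (𝓝 0)) {z : ℝ} (hz : a ≤ z) : f z ≤ g z := by
  by_contra! hzlt
  obtain ⟨x, hx, hxmax⟩ : ∃ x ∈ Ici a, IsMaxOn (fun z ↦ f z - g z) (Ici a) x := by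
    refine (hf.sub hg).exists_isMaxOn' isClosed_Ici (x₀ := z) hz ?_
    rw [cocompact_eq_atBot_atTop, inf_sup_right, eventually_sup]
    refine ⟨?_, ((hlim.eventually_lt_const (sub_pos.2 hzlt)).mono fun _ ↦ le_of_lt).filter_mono
      inf_le_left⟩
    rw [(disjoint_atBot_principal_Ici a).eq_bot]
    exact eventually_bot
  have hxlt : g x < f x := sub_pos.1 ((sub_pos.2 hzlt).trans_le (hxmax hz))
  have hax : a < x := hx.lt_of_ne fun h ↦ (h ▸ hxlt).not_ge ha
  have hderiv : deriv (fun z ↦ f z - g z) =ᶠ[𝓝 x] fun z ↦ f' z - g' z := by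
    filter_upwards [Ioi_mem_nhds hax] with y hy using ((hf' y hy).sub (hg' y hy)).deriv
  have hle := deriv_deriv_nonpos_of_isLocalMax (hxmax.isLocalMax (Ici_mem_nhds hax))
    ((hf' x hax).sub (hg' x hax)).continuousAt
  rw [hderiv.deriv_eq, ((hf'' x hax).fun_sub (hg'' x hax)).deriv] at hle
  exact (sub_nonpos.1 hle).not_gt (hlt x hax hxlt)

/-! ### Power growth for asymptotically Euler potentials -/

lemma exists_tendsto_atTop_of_antitoneOn_Ici {f : ℝ → ℝ} {a m : ℝ} (hf : AntitoneOn f (Ici a))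
    (hm : ∀ z, a ≤ z → m ≤ f z) : ∃ L, Tendsto f atTop (𝓝 L) := by
  have hanti : Antitone fun z ↦ f (max a z) := fun _ _ h ↦
    hf (mem_Ici.2 (le_max_left _ _)) (mem_Ici.2 (le_max_left _ _)) (max_le_max_left a h)
  have hbdd : BddBelow (range fun z ↦ f (max a z)) :=
    ⟨m, forall_mem_range.2 fun _ ↦ hm _ (le_max_left _ _)⟩
  refine ⟨_, (tendsto_atTop_ciInf hanti hbdd).congr' ?_⟩
  filter_upwards [eventually_ge_atTop a] with z hz
  rw [max_eq_right hz]

lemma antitoneOn_add_div_of_deriv_le {f f' : ℝ → ℝ} {a k : ℝ} (ha : 0 < a)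
    (hf : ∀ z, a ≤ z → HasDerivAt f (f' z) z) (hf' : ∀ z, a ≤ z → f' z ≤ k / z ^ 2) :
    AntitoneOn (fun z ↦ f z + k / z) (Ici a) := by
  refine antitoneOn_Ici_of_hasDerivAt_nonpos (f' := fun z ↦ f' z - k / z ^ 2) (fun z hz ↦ ?_)
    fun z hz ↦ sub_nonpos.2 (hf' z hz)
  refine ((hf z hz).add ((hasDerivAt_inv (ha.trans_le hz).ne').const_mul k)).congr_deriv ?_
  ring

lemma exists_tendsto_atTop_of_deriv_le_div_sq {f f' : ℝ → ℝ} {a k : ℝ} (ha : 0 < a) (hk : 0 ≤ k)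
    (hf : ∀ z, a ≤ z → HasDerivAt f (f' z) z) (hf' : ∀ z, a ≤ z → f' z ≤ k / z ^ 2)
    (hf₀ : ∀ z, a ≤ z → 0 ≤ f z) : ∃ L, Tendsto f atTop (𝓝 L) := by
  obtain ⟨L, hL⟩ := exists_tendsto_atTop_of_antitoneOn_Ici (m := 0)
    (antitoneOn_add_div_of_deriv_le ha hf hf') fun z hz ↦
      add_nonneg (hf₀ z hz) (div_nonneg hk (ha.le.trans hz))
  exact ⟨L, by simpa using hL.sub (tendsto_id.const_div_atTop k)⟩

/-- The Wronskian `f' g - f g'` is antitone, so `(f / g)'` is at most a multiple of `1 / z²`. -/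
lemma exists_tendsto_div_of_second_deriv_mul_le {f f' f'' g g' g'' : ℝ → ℝ} {m : ℝ} (hm : 0 < m)
    (hf : ∀ᶠ z in atTop, HasDerivAt f (f' z) z) (hf' : ∀ᶠ z in atTop, HasDerivAt f' (f'' z) z)
    (hg : ∀ᶠ z in atTop, HasDerivAt g (g' z) z) (hg' : ∀ᶠ z in atTop, HasDerivAt g' (g'' z) z)
    (hle : ∀ᶠ z in atTop, f'' z * g z ≤ f z * g'' z) (hf₀ : ∀ᶠ z in atTop, 0 ≤ f z)
    (hg₀ : ∀ᶠ z in atTop, m * z ≤ g z) : ∃ L, Tendsto (fun z ↦ f z / g z) atTop (𝓝 L) := by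
  obtain ⟨a, ha⟩ := eventually_atTop.1 <| (eventually_gt_atTop 0).and <|
    hf.and <| hf'.and <| hg.and <| hg'.and <| hle.and <| hf₀.and hg₀
  choose hpos hf hf' hg hg' hle hf₀ hg₀ using ha
  have hg_pos (z : ℝ) (hz : a ≤ z) : 0 < g z := (mul_pos hm (hpos z hz)).trans_le (hg₀ z hz)
  set W := fun z ↦ f' z * g z - f z * g' z
  have hW : AntitoneOn W (Ici a) :=
    antitoneOn_Ici_of_hasDerivAt_nonpos (f' := fun z ↦ f'' z * g z - f z * g'' z)
      (fun z hz ↦ (((hf' z hz).mul (hg z hz)).sub ((hf z hz).mul (hg' z hz))).congr_deriv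
        (by ring)) fun z hz ↦ sub_nonpos.2 (hle z hz)
  refine exists_tendsto_atTop_of_deriv_le_div_sq (k := |W a| / m ^ 2) (hpos a le_rfl)
    (by positivity) (fun z hz ↦ (hf z hz).div (hg z hz) (hg_pos z hz).ne') (fun z hz ↦ ?_)
    fun z hz ↦ div_nonneg (hf₀ z hz) (hg_pos z hz).le
  have hz₀ := hpos z hz
  calc W z / g z ^ 2 ≤ |W a| / g z ^ 2 := by
        gcongr
        exact (hW self_mem_Ici hz hz).trans (le_abs_self _)
    _ ≤ |W a| / (m * z) ^ 2 := by
        gcongr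
        exact hg₀ z hz
    _ = |W a| / m ^ 2 / z ^ 2 := by rw [mul_pow, div_div]

/-- The two leading terms of a function growing like `z ^ p`. For suitable `c` of either sign these
are sub- and supersolutions of `v'' = q v` at infinity when `q z ≈ p (p - 1) / z²`. -/
noncomputable def perturbedPower (p c z : ℝ) : ℝ := z ^ p + c * z ^ (p - 1)

namespace perturbedPower

variable {p c z : ℝ}

lemma eq_mul (hz : 0 < z) : perturbedPower p c z = z ^ (p - 1) * (z + c) := by
  rw [perturbedPower, Real.rpow_sub_one hz.ne']
  field_simp

lemma half_le (hz : 0 < z) (hc : 2 * |c| ≤ z) : z ^ p / 2 ≤ perturbedPower p c z := by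
  have hzp : z ^ p = z ^ (p - 1) * z := by rw [Real.rpow_sub_one hz.ne']; field_simp
  rw [eq_mul hz, hzp, mul_div_assoc]
  gcongr
  linarith [neg_abs_le c]

lemma le_two_mul (hz : 0 < z) (hc : 2 * |c| ≤ z) : perturbedPower p c z ≤ 2 * z ^ p := by
  have hzp : z ^ p = z ^ (p - 1) * z := by rw [Real.rpow_sub_one hz.ne']; field_simp
  rw [eq_mul hz, hzp, mul_left_comm]
  gcongr
  linarith [le_abs_self c]

lemma eventually_hasDerivAt (c : ℝ) : ∀ᶠ z in atTop, HasDerivAt (perturbedPower p c)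
    (p * z ^ (p - 1) + c * ((p - 1) * z ^ (p - 1 - 1))) z := by
  filter_upwards [eventually_gt_atTop 0] with z hz
  exact (Real.hasDerivAt_rpow_const (.inl hz.ne')).add
    ((Real.hasDerivAt_rpow_const (.inl hz.ne')).const_mul c)

lemma eventually_hasDerivAt_deriv (c : ℝ) : ∀ᶠ z in atTop,
    HasDerivAt (fun z ↦ p * z ^ (p - 1) + c * ((p - 1) * z ^ (p - 1 - 1)))
      ((p * (p - 1) * perturbedPower p c z - 2 * c * (p - 1) * z ^ (p - 1)) / z ^ 2) z := by
  filter_upwards [eventually_gt_atTop 0] with z hz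
  refine (((Real.hasDerivAt_rpow_const (.inl hz.ne')).const_mul p).add
    (((Real.hasDerivAt_rpow_const (.inl hz.ne')).const_mul (p - 1)).const_mul c)).congr_deriv ?_
  simp only [perturbedPower, Real.rpow_sub_one hz.ne']
  field_simp
  ring

lemma tendsto_rpow_neg_mul (p c : ℝ) :
    Tendsto (fun z ↦ z ^ (-p) * perturbedPower p c z) atTop (𝓝 1) := by
  have hlim : Tendsto (fun z : ℝ ↦ 1 + c / z) atTop (𝓝 1) := by
    simpa using (tendsto_id.const_div_atTop c).const_add 1
  refine hlim.congr' ?_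
  filter_upwards [eventually_gt_atTop 0] with z hz
  rw [perturbedPower, Real.rpow_sub_one hz.ne', Real.rpow_neg hz.le]
  field_simp

lemma eventually_half_mul_le (hp : 1 ≤ p) (c : ℝ) :
    ∀ᶠ z in atTop, 1 / 2 * z ≤ perturbedPower p c z := by
  filter_upwards [eventually_ge_atTop 1, eventually_ge_atTop (2 * |c|)] with z hz hzc
  have := Real.self_le_rpow_of_one_le hz hp
  linarith [half_le (p := p) (zero_lt_one.trans_le hz) hzc]

lemma eventually_pos (hp : 1 ≤ p) (c : ℝ) : ∀ᶠ z in atTop, 0 < perturbedPower p c z := by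
  filter_upwards [eventually_half_mul_le hp c, eventually_gt_atTop 0] with z hz hz₀
    using (mul_pos one_half_pos hz₀).trans_le hz

lemma eventually_abs_mul_le {q : ℝ → ℝ} {B : ℝ} (c : ℝ)
    (hq : IsBigOWith B atTop (fun z ↦ q z * z ^ 2 - p * (p - 1)) fun z ↦ z⁻¹) :
    ∀ᶠ z in atTop, |(q z * z ^ 2 - p * (p - 1)) * perturbedPower p c z| ≤
      2 * B * z ^ (p - 1) := by
  filter_upwards [hq.bound, eventually_gt_atTop 0, eventually_ge_atTop (2 * |c|)] with z hqz hz hzc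
  have hv : 0 ≤ perturbedPower p c z := le_trans (by positivity) (half_le hz hzc)
  rw [Real.norm_eq_abs, Real.norm_of_nonneg (inv_nonneg.2 hz.le)] at hqz
  calc |(q z * z ^ 2 - p * (p - 1)) * perturbedPower p c z|
      = |q z * z ^ 2 - p * (p - 1)| * perturbedPower p c z := by rw [abs_mul, abs_of_nonneg hv]
    _ ≤ B * z⁻¹ * (2 * z ^ p) :=
      mul_le_mul hqz (le_two_mul hz hzc) hv ((abs_nonneg _).trans hqz)
    _ = 2 * B * z ^ (p - 1) := by
      rw [Real.rpow_sub_one hz.ne']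
      ring

lemma eventually_mul_le_second_deriv {q : ℝ → ℝ} {B : ℝ}
    (hq : IsBigOWith B atTop (fun z ↦ q z * z ^ 2 - p * (p - 1)) fun z ↦ z⁻¹)
    (hc : c * (p - 1) = -B) : ∀ᶠ z in atTop, q z * perturbedPower p c z ≤
      (p * (p - 1) * perturbedPower p c z - 2 * c * (p - 1) * z ^ (p - 1)) / z ^ 2 := by
  filter_upwards [eventually_abs_mul_le c hq, eventually_gt_atTop 0] with z hz hz₀
  rw [le_div_iff₀ (by positivity), mul_assoc 2, hc]
  linarith [le_abs_self ((q z * z ^ 2 - p * (p - 1)) * perturbedPower p c z)]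

lemma eventually_second_deriv_le_mul {q : ℝ → ℝ} {B : ℝ}
    (hq : IsBigOWith B atTop (fun z ↦ q z * z ^ 2 - p * (p - 1)) fun z ↦ z⁻¹)
    (hc : c * (p - 1) = B) : ∀ᶠ z in atTop,
      (p * (p - 1) * perturbedPower p c z - 2 * c * (p - 1) * z ^ (p - 1)) / z ^ 2 ≤
        q z * perturbedPower p c z := by
  filter_upwards [eventually_abs_mul_le c hq, eventually_gt_atTop 0] with z hz hz₀
  rw [div_le_iff₀ (by positivity), mul_assoc 2, hc]
  linarith [neg_abs_le ((q z * z ^ 2 - p * (p - 1)) * perturbedPower p c z)]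

end perturbedPower

open perturbedPower in
/-- The ratios of `h` to a supersolution and of a subsolution to `h` both converge, and the product
of the two limits is `1`. -/
theorem exists_tendsto_rpow_neg_mul_of_second_order {q h h' : ℝ → ℝ} {p m : ℝ} (hp : 1 < p)
    (hm : 0 < m) (hq : (fun z ↦ q z * z ^ 2 - p * (p - 1)) =O[atTop] fun z ↦ z⁻¹)
    (hh : ∀ᶠ z in atTop, HasDerivAt h (h' z) z)
    (hh' : ∀ᶠ z in atTop, HasDerivAt h' (q z * h z) z) (hlb : ∀ᶠ z in atTop, m * z ≤ h z) :
    ∃ d, 0 < d ∧ Tendsto (fun z ↦ z ^ (-p) * h z) atTop (𝓝 d) := by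
  obtain ⟨B, hq⟩ := hq.isBigOWith
  set A := B / (p - 1)
  have hA : A * (p - 1) = B := div_mul_cancel₀ B (sub_pos.2 hp).ne'
  have hh₀ : ∀ᶠ z in atTop, 0 < h z := by
    filter_upwards [hlb, eventually_gt_atTop 0] with z hz hz₀ using (mul_pos hm hz₀).trans_le hz
  obtain ⟨L, hL⟩ : ∃ L, Tendsto (fun z ↦ h z / perturbedPower p (-A) z) atTop (𝓝 L) := by
    refine exists_tendsto_div_of_second_deriv_mul_le one_half_pos hh hh'
      (eventually_hasDerivAt (-A)) (eventually_hasDerivAt_deriv (-A)) ?_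
      (hh₀.mono fun _ ↦ le_of_lt) (eventually_half_mul_le hp.le _)
    filter_upwards [eventually_mul_le_second_deriv hq (c := -A) (by simp [hA]), hh₀]
      with z hz hhz
    rw [mul_right_comm, mul_comm _ (h z)]
    gcongr
  obtain ⟨M, hM⟩ : ∃ M, Tendsto (fun z ↦ perturbedPower p A z / h z) atTop (𝓝 M) := by
    refine exists_tendsto_div_of_second_deriv_mul_le hm (eventually_hasDerivAt A)
      (eventually_hasDerivAt_deriv A) hh hh' ?_ ((eventually_pos hp.le A).mono fun _ ↦ le_of_lt) hlb
    filter_upwards [eventually_second_deriv_le_mul hq hA, hh₀] with z hz hhz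
    rw [← mul_assoc, mul_comm _ (q z)]
    gcongr
  have hLM : L * M = 1 := by
    have hone := (tendsto_rpow_neg_mul p A).div (tendsto_rpow_neg_mul p (-A)) one_ne_zero
    rw [div_one] at hone
    refine tendsto_nhds_unique ((hL.mul hM).congr' ?_) hone
    filter_upwards [hh₀, eventually_pos hp.le (-A), eventually_gt_atTop 0] with z hz hV hz₀
    have := Real.rpow_pos_of_pos hz₀ (-p)
    simp only [Pi.div_apply]
    field_simp
  have hL₀ : 0 ≤ L := ge_of_tendsto hL <| by
    filter_upwards [hh₀, eventually_pos hp.le (-A)] with z hz hV using by positivity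
  refine ⟨L, hL₀.lt_of_ne' (left_ne_zero_of_mul_eq_one hLM), ?_⟩
  have hlim := hL.mul (tendsto_rpow_neg_mul p (-A))
  rw [mul_one] at hlim
  refine hlim.congr' ?_
  filter_upwards [eventually_pos hp.le (-A)] with z hV
  field_simp

lemma exists_eventually_mul_le_of_second_deriv_pos {h h' h'' : ℝ → ℝ}
    (hh : ∀ z, 0 ≤ z → HasDerivAt h (h' z) z) (hh' : ∀ z, 0 ≤ z → HasDerivAt h' (h'' z) z)
    (hpos : ∀ z, 0 ≤ z → 0 < h'' z) (h₀ : 0 ≤ h 0) (h₀' : 0 ≤ h' 0) :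
    ∃ m, 0 < m ∧ ∀ᶠ z in atTop, m * z ≤ h z := by
  have hmono' : StrictMonoOn h' (Ici 0) :=
    strictMonoOn_of_hasDerivWithinAt_pos (convex_Ici 0)
      (fun z hz ↦ (hh' z hz).continuousAt.continuousWithinAt)
      (fun z hz ↦ (hh' z (interior_subset hz)).hasDerivWithinAt)
      fun z hz ↦ hpos z (interior_subset hz)
  have hmono : MonotoneOn h (Ici 0) := monotoneOn_Ici_of_hasDerivAt_nonneg hh fun z hz ↦
    h₀'.trans (hmono'.monotoneOn self_mem_Ici hz hz)
  have hone : 0 ≤ h 1 := h₀.trans (hmono self_mem_Ici (mem_Ici.2 zero_le_one) zero_le_one)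
  have hone' : 0 < h' 1 :=
    h₀'.trans_lt (hmono' self_mem_Ici (mem_Ici.2 zero_le_one) zero_lt_one)
  have htangent : MonotoneOn (fun z ↦ h z - h' 1 * z) (Ici 1) :=
    monotoneOn_Ici_of_hasDerivAt_nonneg
      (fun z hz ↦ (hh z (zero_le_one.trans hz)).sub ((hasDerivAt_id z).const_mul (h' 1)))
      fun z hz ↦ by
        simpa using hmono'.monotoneOn (mem_Ici.2 zero_le_one) (zero_le_one.trans hz) hz
  refine ⟨h' 1 / 2, half_pos hone', ?_⟩
  filter_upwards [eventually_ge_atTop 2] with z hz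
  have := htangent self_mem_Ici (mem_Ici.2 (one_le_two.trans hz)) (one_le_two.trans hz)
  simp only at this
  nlinarith

theorem exists_second_order_solution_rpow_growth {q : ℝ → ℝ} {p : ℝ} (hp : 1 < p)
    (hq : ContinuousOn q (Ici 0)) (hq_pos : ∀ z, 0 ≤ z → 0 < q z)
    (hq_lim : (fun z ↦ q z * z ^ 2 - p * (p - 1)) =O[atTop] fun z ↦ z⁻¹) :
    ∃ h h' : ℝ → ℝ, h 0 = 1 ∧ h' 0 = 0 ∧ (∀ z, 0 ≤ z → HasDerivAt h (h' z) z) ∧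
      (∀ z, 0 ≤ z → HasDerivAt h' (q z * h z) z) ∧ (∀ z, 0 ≤ z → 1 ≤ h z) ∧
      ∃ d, 0 < d ∧ Tendsto (fun z ↦ z ^ (-p) * h z) atTop (𝓝 d) := by
  obtain ⟨h, h', h₀, h₀', hh, hh'⟩ := exists_forall_hasDerivAt_second_order
    (hq.comp_continuous (f := fun z ↦ max z 0) (by fun_prop) fun z ↦ le_max_right z 0) 1 0
  have hode (z : ℝ) (hz : 0 ≤ z) : HasDerivAt h' (q z * h z) z := by
    simpa only [Function.comp_apply, max_eq_left hz] using hh' z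
  have hle (z : ℝ) (hz : 0 ≤ z) : 1 ≤ h z := h₀ ▸ le_of_second_order_nonneg
    (fun t ht ↦ (hq_pos t ht).le) (fun t _ ↦ hh t) hode (by simp [h₀]) h₀'.ge hz
  obtain ⟨m, hm, hlb⟩ := exists_eventually_mul_le_of_second_deriv_pos (fun z _ ↦ hh z) hode
    (fun z hz ↦ mul_pos (hq_pos z hz) (zero_lt_one.trans_le (hle z hz))) (by simp [h₀]) h₀'.ge
  exact ⟨h, h', h₀, h₀', fun z _ ↦ hh z, hode, hle, exists_tendsto_rpow_neg_mul_of_second_order hp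
    hm hq_lim (.of_forall hh) ((eventually_ge_atTop 0).mono hode) hlb⟩

lemma contDiffOn_two_Ici_of_hasDerivWithinAt {f f' f'' : ℝ → ℝ} {a : ℝ}
    (hf : ∀ z ∈ Ici a, HasDerivWithinAt f (f' z) (Ici a) z)
    (hf' : ∀ z ∈ Ici a, HasDerivWithinAt f' (f'' z) (Ici a) z) (hf'' : ContinuousOn f'' (Ici a)) :
    ContDiffOn ℝ 2 f (Ici a) := by
  have hsucc {g g' : ℝ → ℝ} {k : ℕ} (hg : ∀ z ∈ Ici a, HasDerivWithinAt g (g' z) (Ici a) z)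
      (hg' : ContDiffOn ℝ k g' (Ici a)) : ContDiffOn ℝ (k + 1) g (Ici a) :=
    (contDiffOn_succ_iff_derivWithin (uniqueDiffOn_Ici a)).2
      ⟨fun z hz ↦ (hg z hz).differentiableWithinAt, by simp,
        hg'.congr fun z hz ↦ (hg z hz).derivWithin (uniqueDiffOn_Ici a z hz)⟩
  exact_mod_cast hsucc (k := 1) hf (by exact_mod_cast hsucc (k := 0) hf' (contDiffOn_zero.2 hf''))

lemma derivWithin_derivWithin_Ici_eq {f f' : ℝ → ℝ} {a c z : ℝ}
    (hf : ∀ z ∈ Ici a, HasDerivWithinAt f (f' z) (Ici a) z)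
    (hf' : HasDerivWithinAt f' c (Ici a) z) (hz : z ∈ Ici a) :
    derivWithin (derivWithin f (Ici a)) (Ici a) z = c := by
  rw [derivWithin_congr (fun z hz ↦ (hf z hz).derivWithin (uniqueDiffOn_Ici a z hz))
    ((hf z hz).derivWithin (uniqueDiffOn_Ici a z hz))]
  exact hf'.derivWithin (uniqueDiffOn_Ici a z hz)

/-! ### Decay of solutions at infinity -/

/-- If `f` is convex, then `z * f' z` lies between `2 * (f z - f (z / 2))` and `f (2 * z) - f z`. -/
lemma tendsto_mul_deriv_of_monotoneOn_deriv {f f' : ℝ → ℝ} {L : ℝ}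
    (hf : ∀ z, 0 < z → HasDerivAt f (f' z) z) (hf' : MonotoneOn f' (Ioi 0))
    (hlim : Tendsto f atTop (𝓝 L)) : Tendsto (fun z ↦ z * f' z) atTop (𝓝 0) := by
  have hconv : ConvexOn ℝ (Ioi 0) f := by
    refine MonotoneOn.convexOn_of_deriv (convex_Ioi 0)
      (fun z hz ↦ (hf z hz).continuousAt.continuousWithinAt) ?_ ?_ <;> rw [interior_Ioi]
    · exact fun z hz ↦ (hf z hz).differentiableAt.differentiableWithinAt
    · exact hf'.congr fun z hz ↦ (hf z hz).deriv.symm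
  have hhalf : Tendsto (fun z ↦ 2 * (f z - f (z / 2))) atTop (𝓝 0) := by
    simpa using (hlim.sub (hlim.comp (tendsto_id.atTop_div_const two_pos))).const_mul 2
  have hdouble : Tendsto (fun z ↦ f (2 * z) - f z) atTop (𝓝 0) := by
    simpa using (hlim.comp (tendsto_id.const_mul_atTop two_pos)).sub hlim
  refine tendsto_of_tendsto_of_tendsto_of_le_of_le' hhalf hdouble ?_ ?_
  · filter_upwards [eventually_gt_atTop 0] with z hz
    have := hconv.slope_le_of_hasDerivAt (half_pos hz) hz (half_lt_self hz) (hf z hz)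
    rw [slope_def_field, sub_half, div_le_iff₀ (half_pos hz)] at this
    linarith
  · filter_upwards [eventually_gt_atTop 0] with z hz
    have hzz : z < 2 * z := by linarith
    have := hconv.le_slope_of_hasDerivAt hz (hz.trans hzz) hzz (hf z hz)
    rw [slope_def_field, two_mul, add_sub_cancel_right, le_div_iff₀ hz, ← two_mul] at this
    linarith

lemma tendsto_mul_rpow_of_tendsto_deriv_mul_rpow {f f' : ℝ → ℝ} {s L : ℝ} (hs : 0 < s)
    (hf : ∀ᶠ z in atTop, HasDerivAt f (f' z) z) (hf₀ : Tendsto f atTop (𝓝 0))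
    (hlim : Tendsto (fun z ↦ f' z * z ^ (s + 1)) atTop (𝓝 L)) :
    Tendsto (fun z ↦ f z * z ^ s) atTop (𝓝 (-L / s)) := by
  have hratio : Tendsto (fun z ↦ f z / z ^ (-s)) atTop (𝓝 (-L / s)) := by
    refine HasDerivAt.lhopital_zero_atTop (g' := fun z ↦ -s * z ^ (-s - 1)) hf ?_ ?_ hf₀
      (tendsto_rpow_neg_atTop hs) ?_
    · filter_upwards [eventually_gt_atTop 0] with z hz
      exact Real.hasDerivAt_rpow_const (.inl hz.ne')
    · filter_upwards [eventually_gt_atTop 0] with z hz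
      exact mul_ne_zero (neg_ne_zero.2 hs.ne') (Real.rpow_pos_of_pos hz _).ne'
    · refine (hlim.neg.div_const s).congr' ?_
      filter_upwards [eventually_gt_atTop 0] with z hz
      rw [← neg_add', Real.rpow_neg hz.le]
      field_simp
  refine hratio.congr' ?_
  filter_upwards [eventually_gt_atTop 0] with z hz
  rw [Real.rpow_neg hz.le, div_inv_eq_mul]

lemma le_mul_rpow_neg_of_second_deriv_lt {f f' f'' : ℝ → ℝ} {a B σ : ℝ} (ha : 0 < a) (hσ : 0 < σ)
    (hf : ∀ z, a ≤ z → HasDerivAt f (f' z) z) (hf' : ∀ z, a ≤ z → HasDerivAt f' (f'' z) z)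
    (hlt : ∀ z, a < z → B * z ^ (-σ) < f z → σ * (σ + 1) * (B * z ^ (-σ)) < f'' z * z ^ 2)
    (hfa : f a ≤ B * a ^ (-σ)) (hlim : Tendsto f atTop (𝓝 0)) {z : ℝ} (hz : a ≤ z) :
    f z ≤ B * z ^ (-σ) := by
  have hpow {s z : ℝ} (hz : a ≤ z) : HasDerivAt (fun z ↦ z ^ s) (s * z ^ (s - 1)) z :=
    Real.hasDerivAt_rpow_const (.inl (ha.trans_le hz).ne')
  refine le_of_second_deriv_lt_of_lt (g := fun z ↦ B * z ^ (-σ))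
    (fun z hz ↦ (hf z hz).continuousAt.continuousWithinAt)
    (fun z hz ↦ ((hpow hz).const_mul B).continuousAt.continuousWithinAt) (fun z hz ↦ hf z hz.le)
    (fun z hz ↦ (hpow hz.le).const_mul B) (fun z hz ↦ hf' z hz.le)
    (fun z hz ↦ ((hpow hz.le).const_mul (-σ)).const_mul B) (fun z hz hlt' ↦ ?_) hfa ?_ hz
  · have hz₀ : 0 < z := ha.trans hz
    calc B * (-σ * ((-σ - 1) * z ^ (-σ - 1 - 1))) = σ * (σ + 1) * (B * z ^ (-σ)) / z ^ 2 := by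
          simp only [Real.rpow_sub_one hz₀.ne']
          field_simp
          ring
      _ < f'' z := (div_lt_iff₀ (by positivity)).2 (hlt z hz hlt')
  · simpa using hlim.sub ((tendsto_rpow_neg_atTop hσ).const_mul B)

/-- The barrier `B * z ^ (-σ)` works for large `B`, because `σ * (σ + 1)` lies below the limit of
`q z * z ^ 2`. -/
lemma exists_eventually_le_mul_rpow_neg {f f' f'' q : ℝ → ℝ} {K L σ : ℝ} (hσ : 0 < σ)
    (hf : ∀ᶠ z in atTop, HasDerivAt f (f' z) z) (hf' : ∀ᶠ z in atTop, HasDerivAt f' (f'' z) z)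
    (hq : Tendsto (fun z ↦ q z * z ^ 2) atTop (𝓝 L)) (hL : σ * (σ + 1) < L)
    (hle : ∀ᶠ z in atTop, q z * (f z - K * z ^ (-σ)) ≤ f'' z) (hlim : Tendsto f atTop (𝓝 0)) :
    ∃ B, ∀ᶠ z in atTop, f z ≤ B * z ^ (-σ) := by
  obtain ⟨μ, hσμ, hμL⟩ := exists_between hL
  have hμ : 0 < μ := lt_trans (by positivity) hσμ
  obtain ⟨a, ha⟩ := eventually_atTop.1 <| (eventually_gt_atTop 0).and <| hf.and <| hf'.and <|
    hle.and <| hq.eventually_const_lt hμL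
  choose hpos hf hf' hle hμq using ha
  have ha₀ : 0 < a := hpos a le_rfl
  obtain ⟨B, hB₀, hBK, hBa⟩ : ∃ B, 0 ≤ B ∧ μ * K / (μ - σ * (σ + 1)) ≤ B ∧ f a * a ^ σ ≤ B :=
    ((eventually_ge_atTop 0).and <| (eventually_ge_atTop _).and <| eventually_ge_atTop _).exists
  have hσB : σ * (σ + 1) * B ≤ μ * (B - K) := by
    rw [div_le_iff₀' (sub_pos.2 hσμ)] at hBK
    linarith
  have hKB : 0 ≤ B - K := by
    have : 0 ≤ σ * (σ + 1) * B := by positivity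
    exact nonneg_of_mul_nonneg_right (this.trans hσB) hμ
  have hinit : f a ≤ B * a ^ (-σ) := by
    rwa [Real.rpow_neg ha₀.le, ← div_eq_mul_inv, le_div_iff₀ (Real.rpow_pos_of_pos ha₀ _)]
  refine ⟨B, (eventually_ge_atTop a).mono fun z hz ↦
    le_mul_rpow_neg_of_second_deriv_lt ha₀ hσ hf hf' (fun z hz hlt ↦ ?_) hinit hlim hz⟩
  have hz₀ : 0 < z ^ (-σ) := Real.rpow_pos_of_pos (ha₀.trans hz) _
  have hgap : (B - K) * z ^ (-σ) < f z - K * z ^ (-σ) := by linarith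
  calc σ * (σ + 1) * (B * z ^ (-σ)) = σ * (σ + 1) * B * z ^ (-σ) := by ring
    _ ≤ μ * (B - K) * z ^ (-σ) := by gcongr
    _ = μ * ((B - K) * z ^ (-σ)) := by ring
    _ < μ * (f z - K * z ^ (-σ)) := by gcongr
    _ ≤ q z * z ^ 2 * (f z - K * z ^ (-σ)) :=
      mul_le_mul_of_nonneg_right (hμq z hz.le).le ((mul_nonneg hKB hz₀.le).trans hgap.le)
    _ = q z * (f z - K * z ^ (-σ)) * z ^ 2 := by ring
    _ ≤ f'' z * z ^ 2 := by gcongr; exact hle z hz.le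

lemma del_mul_sub_one {n : ℕ} (hn : 2 ≤ n) : del n * (n - 1) = n + 2 := by
  have : (2 : ℝ) ≤ n := by exact_mod_cast hn
  exact div_mul_cancel₀ _ (by linarith)

lemma one_lt_del {n : ℕ} (hn : 2 ≤ n) : 1 < del n := by
  have : (2 : ℝ) ≤ n := by exact_mod_cast hn
  rw [del, one_lt_div (by linarith)]
  linarith

lemma pplus_mul_pplus_sub_one {n : ℕ} (hn : 2 ≤ n) :
    pplus n * (pplus n - 1) = n * del n * (del n + 1) := by
  have hdel := one_lt_del hn
  have hsq : Real.sqrt (1 + 4 * n * del n * (del n + 1)) ^ 2 = 1 + 4 * n * del n * (del n + 1) :=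
    Real.sq_sqrt (by positivity)
  rw [pplus]
  linear_combination hsq / 4

lemma one_lt_pplus {n : ℕ} (hn : 2 ≤ n) : 1 < pplus n := by
  have hdel := one_lt_del hn
  have : (0 : ℝ) < n := by positivity
  have hsqrt : 1 < Real.sqrt (1 + 4 * n * del n * (del n + 1)) :=
    Real.lt_sqrt_of_sq_lt (by rw [one_pow]; exact lt_add_of_pos_right 1 (by positivity))
  rw [pplus]
  linarith

/-! ### Reactive profiles -/

/-- The base `2κzη + η²` of the reaction term. -/
def reactantProduct (κ : ℝ) (η : ℝ → ℝ) (z : ℝ) : ℝ := 2 * κ * z * η z + η z ^ 2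

/-- The potential `q` of the paper for an arbitrary constant `κ`: the derivative of the reaction
term `(2κzη + η²)ⁿ` with respect to `η`. -/
def linearizedRate (κ : ℝ) (n : ℕ) (η : ℝ → ℝ) (z : ℝ) : ℝ :=
  n * reactantProduct κ η z ^ (n - 1) * (2 * κ * z + 2 * η z)

/-- A positive solution `η` of `η'' = (2κzη + η²)ⁿ` on `[0, ∞)` with derivative `η'` that vanishes
at infinity. The slope at the origin is not prescribed. -/
structure IsDecayingProfile (κ : ℝ) (n : ℕ) (η η' : ℝ → ℝ) : Prop where
  hasDerivWithinAt : ∀ z ∈ Ici (0 : ℝ), HasDerivWithinAt η (η' z) (Ici 0) z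
  hasDerivWithinAt_deriv :
    ∀ z ∈ Ici (0 : ℝ), HasDerivWithinAt η' (reactantProduct κ η z ^ n) (Ici 0) z
  pos : ∀ z ∈ Ici (0 : ℝ), 0 < η z
  tendsto_zero : Tendsto η atTop (𝓝 0)

/-- The product `y = z ^ δ * η z`, which converges to a positive limit. -/
noncomputable def rescaledProfile (n : ℕ) (η : ℝ → ℝ) (z : ℝ) : ℝ := z ^ del n * η z

/-- The size of the term `η²` of `reactantProduct` relative to the term `2κzη`. -/
noncomputable def relativeCorrection (κ : ℝ) (η : ℝ → ℝ) (z : ℝ) : ℝ := η z / (2 * κ * z)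

/-- The function `w = z η' + δ η`, which is the derivative at `1` of the family
`c ↦ c ^ δ * η (c * z)` and measures how far `η` is from the power law `z ^ (-δ)`. -/
noncomputable def scalingDefect (n : ℕ) (η η' : ℝ → ℝ) (z : ℝ) : ℝ := z * η' z + del n * η z

section Rescaling

variable {κ : ℝ} {n : ℕ} {η : ℝ → ℝ} {z : ℝ}

lemma reactantProduct_eq_mul (hκ : κ ≠ 0) (hz : z ≠ 0) :
    reactantProduct κ η z = 2 * κ * (z * η z) * (1 + relativeCorrection κ η z) := by
  rw [reactantProduct, relativeCorrection]
  field_simp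

lemma rescaledProfile_pow (hn : 2 ≤ n) (hz : 0 < z) :
    rescaledProfile n η z ^ (n - 1) = z ^ (n + 2) * η z ^ (n - 1) := by
  rw [rescaledProfile, mul_pow, ← Real.rpow_mul_natCast hz.le, Nat.cast_pred (by omega),
    del_mul_sub_one hn]
  norm_cast

lemma reactantProduct_pow_mul_sq (hκ : κ ≠ 0) (hn : 2 ≤ n) (hz : 0 < z) :
    reactantProduct κ η z ^ n * z ^ 2 = (2 * κ) ^ n * rescaledProfile n η z ^ (n - 1) *
      (1 + relativeCorrection κ η z) ^ n * η z := by
  rw [rescaledProfile_pow hn hz, reactantProduct_eq_mul hκ hz.ne']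
  obtain ⟨m, rfl⟩ := Nat.exists_eq_add_of_le' hn
  simp only [show m + 2 - 1 = m + 1 from rfl, mul_pow]
  ring

lemma linearizedRate_mul_sq (hκ : κ ≠ 0) (hn : 2 ≤ n) (hz : 0 < z) :
    linearizedRate κ n η z * z ^ 2 = n * (2 * κ) ^ n * rescaledProfile n η z ^ (n - 1) *
      (1 + relativeCorrection κ η z) ^ (n - 1) * (1 + 2 * relativeCorrection κ η z) := by
  have hη : η z = 2 * κ * z * relativeCorrection κ η z := by rw [relativeCorrection]; field_simp
  rw [linearizedRate, rescaledProfile_pow hn hz, reactantProduct_eq_mul hκ hz.ne']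
  obtain ⟨m, rfl⟩ := Nat.exists_eq_add_of_le' hn
  simp only [show m + 2 - 1 = m + 1 from rfl, mul_pow]
  linear_combination 2 * ((m + 2 : ℕ) : ℝ) * (2 ^ (m + 1) * κ ^ (m + 1) *
    (z ^ (m + 1) * η z ^ (m + 1)) * (1 + relativeCorrection κ η z) ^ (m + 1)) * z ^ 2 * hη

end Rescaling

namespace IsDecayingProfile

variable {κ : ℝ} {n : ℕ} {η η' : ℝ → ℝ} {z : ℝ}

lemma hasDerivAt (h : IsDecayingProfile κ n η η') (hz : 0 < z) : HasDerivAt η (η' z) z :=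
  (h.hasDerivWithinAt z hz.le).hasDerivAt (Ici_mem_nhds hz)

lemma hasDerivAt_deriv (h : IsDecayingProfile κ n η η') (hz : 0 < z) :
    HasDerivAt η' (reactantProduct κ η z ^ n) z :=
  (h.hasDerivWithinAt_deriv z hz.le).hasDerivAt (Ici_mem_nhds hz)

lemma continuousOn (h : IsDecayingProfile κ n η η') : ContinuousOn η (Ici 0) :=
  fun z hz ↦ (h.hasDerivWithinAt z hz).continuousWithinAt

lemma continuousOn_deriv (h : IsDecayingProfile κ n η η') : ContinuousOn η' (Ici 0) :=
  fun z hz ↦ (h.hasDerivWithinAt_deriv z hz).continuousWithinAt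

lemma reactantProduct_pos (h : IsDecayingProfile κ n η η') (hκ : 0 ≤ κ) (hz : 0 ≤ z) :
    0 < reactantProduct κ η z := by
  have := h.pos z hz
  rw [reactantProduct]
  positivity

lemma linearizedRate_pos (h : IsDecayingProfile κ n η η') (hκ : 0 ≤ κ) (hn : n ≠ 0) (hz : 0 ≤ z) :
    0 < linearizedRate κ n η z := by
  have := h.pos z hz
  have := h.reactantProduct_pos hκ hz
  rw [linearizedRate]
  positivity

lemma continuousOn_linearizedRate (h : IsDecayingProfile κ n η η') :
    ContinuousOn (linearizedRate κ n η) (Ici 0) := by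
  have := h.continuousOn
  unfold linearizedRate reactantProduct
  fun_prop

lemma rescaledProfile_pos (h : IsDecayingProfile κ n η η') (hz : 0 < z) :
    0 < rescaledProfile n η z :=
  mul_pos (Real.rpow_pos_of_pos hz _) (h.pos z hz.le)

lemma relativeCorrection_pos (h : IsDecayingProfile κ n η η') (hκ : 0 < κ) (hz : 0 < z) :
    0 < relativeCorrection κ η z := by
  have := h.pos z hz.le
  rw [relativeCorrection]
  positivity

lemma isBigO_relativeCorrection (h : IsDecayingProfile κ n η η') :
    relativeCorrection κ η =O[atTop] fun z ↦ z⁻¹ := by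
  have hη : (fun z ↦ (2 * κ)⁻¹ * η z) =O[atTop] fun _ ↦ (1 : ℝ) :=
    (h.tendsto_zero.const_mul _).isBigO_one ℝ
  refine (hη.mul (isBigO_refl (fun z : ℝ ↦ z⁻¹) atTop)).congr (fun z ↦ ?_) fun z ↦ one_mul _
  rw [relativeCorrection, div_eq_mul_inv, mul_inv]
  ring

lemma tendsto_relativeCorrection (h : IsDecayingProfile κ n η η') :
    Tendsto (relativeCorrection κ η) atTop (𝓝 0) :=
  h.isBigO_relativeCorrection.trans_tendsto tendsto_inv_atTop_zero

lemma tendsto_mul_deriv (h : IsDecayingProfile κ n η η') (hκ : 0 ≤ κ) :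
    Tendsto (fun z ↦ z * η' z) atTop (𝓝 0) := by
  refine tendsto_mul_deriv_of_monotoneOn_deriv (fun z ↦ h.hasDerivAt) ?_ h.tendsto_zero
  refine (monotoneOn_of_hasDerivWithinAt_nonneg (convex_Ici 0) h.continuousOn_deriv
    (fun z hz ↦ (h.hasDerivWithinAt_deriv z (interior_subset hz)).mono interior_subset)
    fun z hz ↦ ?_).mono Ioi_subset_Ici_self
  have := h.reactantProduct_pos hκ (interior_subset hz)
  positivity

lemma tendsto_deriv (h : IsDecayingProfile κ n η η') (hκ : 0 ≤ κ) : Tendsto η' atTop (𝓝 0) := by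
  have hlim := (h.tendsto_mul_deriv hκ).mul tendsto_inv_atTop_zero
  rw [mul_zero] at hlim
  refine hlim.congr' ?_
  filter_upwards [eventually_gt_atTop 0] with z hz
  field_simp

lemma tendsto_scalingDefect (h : IsDecayingProfile κ n η η') (hκ : 0 ≤ κ) :
    Tendsto (scalingDefect n η η') atTop (𝓝 0) := by
  simpa [scalingDefect] using! (h.tendsto_mul_deriv hκ).add (h.tendsto_zero.const_mul (del n))

lemma hasDerivAt_scalingDefect (h : IsDecayingProfile κ n η η') (hz : 0 < z) :
    HasDerivAt (scalingDefect n η η') ((1 + del n) * η' z + z * reactantProduct κ η z ^ n) z :=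
  (((hasDerivAt_id z).mul (h.hasDerivAt_deriv hz)).add
    ((h.hasDerivAt hz).const_mul (del n))).congr_deriv (by simp only [id]; ring)

/-- The exponent `δ` is the one for which the terms in `2κzη` cancel. -/
lemma hasDerivAt_deriv_scalingDefect (h : IsDecayingProfile κ n η η') (hn : 2 ≤ n) (hz : 0 < z) :
    HasDerivAt (fun z ↦ (1 + del n) * η' z + z * reactantProduct κ η z ^ n)
      (linearizedRate κ n η z * scalingDefect n η η' z -
        n * (del n + 1) * reactantProduct κ η z ^ (n - 1) * η z ^ 2) z := by
  have hη := h.hasDerivAt hz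
  have hF : HasDerivAt (reactantProduct κ η)
      (2 * κ * η z + (2 * κ * z + 2 * η z) * η' z) z :=
    ((((hasDerivAt_id z).const_mul (2 * κ)).mul hη).add (hη.pow 2)).congr_deriv
      (by simp only [id]; ring)
  refine (((h.hasDerivAt_deriv hz).const_mul (1 + del n)).add
    ((hasDerivAt_id z).mul (hF.fun_pow n))).congr_deriv ?_
  have hpow : reactantProduct κ η z ^ n =
      reactantProduct κ η z ^ (n - 1) * (2 * κ * z * η z + η z ^ 2) := by
    rw [← reactantProduct, pow_sub_one_mul (by omega)]
  rw [hpow, linearizedRate, scalingDefect, id]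
  linear_combination reactantProduct κ η z ^ (n - 1) * (-2 * κ * z * η z - η z ^ 2) *
    del_mul_sub_one hn

lemma scalingDefect_nonneg (h : IsDecayingProfile κ n η η') (hκ : 0 ≤ κ) (hn : 2 ≤ n)
    (hz : 0 ≤ z) : 0 ≤ scalingDefect n η η' z := by
  have hdel := one_lt_del hn
  have hcont : ContinuousOn (scalingDefect n η η') (Ici 0) :=
    (continuousOn_id.mul h.continuousOn_deriv).add (h.continuousOn.const_mul (del n))
  have hinit : 0 ≤ scalingDefect n η η' 0 := by
    have := h.pos 0 self_mem_Ici
    rw [scalingDefect, zero_mul, zero_add]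
    positivity
  refine le_of_second_deriv_lt_of_lt (f := fun _ ↦ 0) (f' := fun _ ↦ 0) (f'' := fun _ ↦ 0)
    continuousOn_const hcont (fun z _ ↦ hasDerivAt_const z 0)
    (fun z ↦ h.hasDerivAt_scalingDefect) (fun z _ ↦ hasDerivAt_const z 0)
    (fun z ↦ h.hasDerivAt_deriv_scalingDefect hn) (fun z hz hneg ↦ ?_) hinit
    (by simpa using (h.tendsto_scalingDefect hκ).const_sub 0) hz
  have hη := h.pos z hz.le
  have hF := h.reactantProduct_pos hκ hz.le
  have hdamp : 0 < n * (del n + 1) * reactantProduct κ η z ^ (n - 1) * η z ^ 2 := by positivity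
  linarith [mul_neg_of_pos_of_neg (h.linearizedRate_pos hκ (by omega) hz.le) hneg]

lemma hasDerivAt_rescaledProfile (h : IsDecayingProfile κ n η η') (hz : 0 < z) :
    HasDerivAt (rescaledProfile n η) (z ^ (del n - 1) * scalingDefect n η η' z) z := by
  refine ((Real.hasDerivAt_rpow_const (.inl hz.ne')).mul (h.hasDerivAt hz)).congr_deriv ?_
  rw [scalingDefect, Real.rpow_sub_one hz.ne']
  field_simp
  ring

lemma monotoneOn_rescaledProfile (h : IsDecayingProfile κ n η η') (hκ : 0 ≤ κ) (hn : 2 ≤ n) {a : ℝ}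
    (ha : 0 < a) : MonotoneOn (rescaledProfile n η) (Ici a) :=
  monotoneOn_Ici_of_hasDerivAt_nonneg
    (fun _ hz ↦ h.hasDerivAt_rescaledProfile (ha.trans_le hz)) fun _ hz ↦
      have hz₀ := ha.le.trans hz
      mul_nonneg (Real.rpow_nonneg hz₀ _) (h.scalingDefect_nonneg hκ hn hz₀)

/-- For large `B` the barrier `B * z ^ (-δ)` is a supersolution of the profile equation. -/
lemma exists_rescaledProfile_le (h : IsDecayingProfile κ n η η') (hκ : 0 < κ) (hn : 2 ≤ n) :
    ∃ B, ∀ z, 1 ≤ z → rescaledProfile n η z ≤ B := by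
  have hdel := one_lt_del hn
  have hiff {z B : ℝ} (hz : 0 < z) : η z ≤ B * z ^ (-del n) ↔ rescaledProfile n η z ≤ B := by
    rw [rescaledProfile, Real.rpow_neg hz.le, ← div_eq_mul_inv,
      le_div_iff₀' (Real.rpow_pos_of_pos hz _)]
  obtain ⟨B, hB, hB₁, hB'⟩ : ∃ B : ℝ, 0 < B ∧ rescaledProfile n η 1 ≤ B ∧
      del n * (del n + 1) ≤ (2 * κ) ^ n * B ^ (n - 1) := by
    have hlim : Tendsto (fun B : ℝ ↦ (2 * κ) ^ n * B ^ (n - 1)) atTop atTop :=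
      (tendsto_pow_atTop (by omega)).const_mul_atTop (by positivity)
    exact ((eventually_gt_atTop 0).and <| (eventually_ge_atTop _).and <|
      hlim.eventually_ge_atTop _).exists
  refine ⟨B, fun z hz ↦ (hiff (zero_lt_one.trans_le hz)).1 <|
    le_mul_rpow_neg_of_second_deriv_lt zero_lt_one (zero_lt_one.trans hdel)
      (fun z hz ↦ h.hasDerivAt (zero_lt_one.trans_le hz))
      (fun z hz ↦ h.hasDerivAt_deriv (zero_lt_one.trans_le hz)) (fun z hz hlt ↦ ?_)
      ((hiff zero_lt_one).2 hB₁) h.tendsto_zero hz⟩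
  have hz₀ : 0 < z := zero_lt_one.trans hz
  have hy : B < rescaledProfile n η z := not_le.1 fun hle ↦ hlt.not_ge ((hiff hz₀).2 hle)
  have hη := h.pos z hz₀.le
  have hone : 1 ≤ (1 + relativeCorrection κ η z) ^ n :=
    one_le_pow₀ (le_add_of_nonneg_right (h.relativeCorrection_pos hκ hz₀).le)
  calc del n * (del n + 1) * (B * z ^ (-del n)) < del n * (del n + 1) * η z := by gcongr
    _ ≤ (2 * κ) ^ n * B ^ (n - 1) * η z := by gcongr
    _ ≤ (2 * κ) ^ n * rescaledProfile n η z ^ (n - 1) * η z := by gcongr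
    _ ≤ (2 * κ) ^ n * rescaledProfile n η z ^ (n - 1) * (1 + relativeCorrection κ η z) ^ n *
        η z := by
      have hy₀ := h.rescaledProfile_pos hz₀
      exact mul_le_mul_of_nonneg_right (le_mul_of_one_le_right (by positivity) hone) hη.le
    _ = reactantProduct κ η z ^ n * z ^ 2 := (reactantProduct_pow_mul_sq hκ.ne' hn hz₀).symm

lemma exists_tendsto_rescaledProfile (h : IsDecayingProfile κ n η η') (hκ : 0 < κ) (hn : 2 ≤ n) :
    ∃ C, 0 < C ∧ Tendsto (rescaledProfile n η) atTop (𝓝 C) := by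
  obtain ⟨B, hB⟩ := h.exists_rescaledProfile_le hκ hn
  have hmono := h.monotoneOn_rescaledProfile hκ.le hn zero_lt_one
  obtain ⟨L, hL⟩ := exists_tendsto_atTop_of_antitoneOn_Ici hmono.neg fun z hz ↦ neg_le_neg (hB z hz)
  refine ⟨-L, (h.rescaledProfile_pos zero_lt_one).trans_le ?_, by simpa using! hL.neg⟩
  exact ge_of_tendsto hL.neg ((eventually_ge_atTop 1).mono fun z hz ↦ by
    simpa using hmono self_mem_Ici hz hz)

lemma rescaledProfile_le_of_tendsto (h : IsDecayingProfile κ n η η') (hκ : 0 ≤ κ) (hn : 2 ≤ n)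
    {C : ℝ} (hC : Tendsto (rescaledProfile n η) atTop (𝓝 C)) (hz : 0 < z) :
    rescaledProfile n η z ≤ C :=
  ge_of_tendsto hC ((eventually_ge_atTop z).mono fun _ ht ↦
    h.monotoneOn_rescaledProfile hκ hn hz self_mem_Ici ht ht)

/-- The limit is read off the equation by applying L'Hôpital's rule twice. -/
lemma limit_rescaledProfile_pow (h : IsDecayingProfile κ n η η') (hκ : 0 < κ) (hn : 2 ≤ n) {C : ℝ}
    (hC₀ : C ≠ 0) (hC : Tendsto (rescaledProfile n η) atTop (𝓝 C)) :
    (2 * κ) ^ n * C ^ (n - 1) = del n * (del n + 1) := by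
  have hdel := one_lt_del hn
  have hη'' : Tendsto (fun z ↦ reactantProduct κ η z ^ n * z ^ (del n + 1 + 1)) atTop
      (𝓝 ((2 * κ) ^ n * C ^ (n - 1) * C)) := by
    have hlim := (((hC.pow (n - 1)).const_mul ((2 * κ) ^ n)).mul
      ((h.tendsto_relativeCorrection.const_add 1).pow n)).mul hC
    rw [add_zero, one_pow, mul_one] at hlim
    refine hlim.congr' ?_
    filter_upwards [eventually_gt_atTop 0] with z hz
    have hpow : z ^ (del n + 1 + 1) = z ^ 2 * z ^ del n := by
      rw [Real.rpow_add_one hz.ne', Real.rpow_add_one hz.ne']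
      ring
    rw [hpow, ← mul_assoc, reactantProduct_pow_mul_sq hκ.ne' hn hz, mul_assoc _ (η z),
      mul_comm (η z)]
    rfl
  have hη' := tendsto_mul_rpow_of_tendsto_deriv_mul_rpow (by linarith)
    ((eventually_gt_atTop 0).mono fun z ↦ h.hasDerivAt_deriv) (h.tendsto_deriv hκ.le) hη''
  have hη := tendsto_mul_rpow_of_tendsto_deriv_mul_rpow (by linarith)
    ((eventually_gt_atTop 0).mono fun z ↦ h.hasDerivAt) h.tendsto_zero hη'
  have heq := tendsto_nhds_unique (hη.congr fun z ↦ mul_comm _ _) hC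
  field_simp at heq
  linarith

lemma tendsto_linearizedRate_mul_sq (h : IsDecayingProfile κ n η η') (hκ : 0 < κ) (hn : 2 ≤ n)
    {C : ℝ} (hC₀ : C ≠ 0) (hC : Tendsto (rescaledProfile n η) atTop (𝓝 C)) :
    Tendsto (fun z ↦ linearizedRate κ n η z * z ^ 2) atTop (𝓝 (n * del n * (del n + 1))) := by
  have hs := h.tendsto_relativeCorrection
  have hlim := (((hC.pow (n - 1)).const_mul (n * (2 * κ) ^ n)).mul
    ((hs.const_add 1).pow (n - 1))).mul ((hs.const_mul 2).const_add 1)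
  rw [add_zero, one_pow, mul_zero, add_zero, mul_one, mul_one, mul_assoc,
    h.limit_rescaledProfile_pow hκ hn hC₀ hC, ← mul_assoc] at hlim
  refine hlim.congr' ?_
  filter_upwards [eventually_gt_atTop 0] with z hz
  exact (linearizedRate_mul_sq hκ.ne' hn hz).symm

lemma damping_le_linearizedRate_mul (h : IsDecayingProfile κ n η η') (hκ : 0 < κ) (hn : 2 ≤ n)
    (hz : 0 < z) : n * (del n + 1) * reactantProduct κ η z ^ (n - 1) * η z ^ 2 ≤
      linearizedRate κ n η z * ((del n + 1) * η z ^ 2 / (2 * κ * z)) := by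
  have hdel := one_lt_del hn
  have hη := h.pos z hz.le
  have hF := h.reactantProduct_pos hκ.le hz.le
  calc n * (del n + 1) * reactantProduct κ η z ^ (n - 1) * η z ^ 2
      = n * reactantProduct κ η z ^ (n - 1) * (2 * κ * z) *
          ((del n + 1) * η z ^ 2 / (2 * κ * z)) := by field_simp
    _ ≤ _ := by
      unfold linearizedRate
      gcongr
      linarith

lemma sq_div_le_mul_rpow_neg (h : IsDecayingProfile κ n η η') (hκ : 0 ≤ κ) (hn : 2 ≤ n) {C : ℝ}
    (hC : Tendsto (rescaledProfile n η) atTop (𝓝 C)) (hz : 1 ≤ z) :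
    η z ^ 2 / z ≤ C ^ 2 * z ^ (-(del n + 1)) := by
  have hdel := one_lt_del hn
  have hz₀ : 0 < z := zero_lt_one.trans_le hz
  have hη := h.pos z hz₀.le
  have hone : 1 ≤ z ^ del n := Real.one_le_rpow hz (by linarith)
  rw [Real.rpow_neg hz₀.le, ← div_eq_mul_inv, Real.rpow_add_one hz₀.ne', ← div_div]
  gcongr
  rw [le_div_iff₀ (by positivity)]
  calc η z ^ 2 * z ^ del n ≤ η z ^ 2 * z ^ del n * z ^ del n :=
        le_mul_of_one_le_right (by positivity) hone
    _ = rescaledProfile n η z ^ 2 := by rw [rescaledProfile]; ring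
    _ ≤ C ^ 2 := pow_le_pow_left₀ (h.rescaledProfile_pos hz₀).le
      (h.rescaledProfile_le_of_tendsto hκ hn hC hz₀) 2

lemma exists_eventually_scalingDefect_le (h : IsDecayingProfile κ n η η') (hκ : 0 < κ)
    (hn : 2 ≤ n) {C : ℝ} (hC₀ : C ≠ 0) (hC : Tendsto (rescaledProfile n η) atTop (𝓝 C)) :
    ∃ B, ∀ᶠ z in atTop, scalingDefect n η η' z ≤ B * z ^ (-(del n + 1)) := by
  have hdel := one_lt_del hn
  have hL : (del n + 1) * (del n + 1 + 1) < n * del n * (del n + 1) := by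
    have hn₀ : (0 : ℝ) < n := by positivity
    nlinarith [del_mul_sub_one hn]
  refine exists_eventually_le_mul_rpow_neg (K := (del n + 1) * C ^ 2 / (2 * κ)) (by linarith)
    ((eventually_gt_atTop 0).mono fun z ↦ h.hasDerivAt_scalingDefect)
    ((eventually_gt_atTop 0).mono fun z ↦ h.hasDerivAt_deriv_scalingDefect hn)
    (h.tendsto_linearizedRate_mul_sq hκ hn hC₀ hC) hL
    ((eventually_ge_atTop 1).mono fun z hz ↦ ?_) (h.tendsto_scalingDefect hκ.le)
  have hz₀ : 0 < z := zero_lt_one.trans_le hz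
  have hdamp : (del n + 1) * η z ^ 2 / (2 * κ * z) ≤
      (del n + 1) * C ^ 2 / (2 * κ) * z ^ (-(del n + 1)) := by
    calc (del n + 1) * η z ^ 2 / (2 * κ * z) = (del n + 1) / (2 * κ) * (η z ^ 2 / z) := by
          field_simp
      _ ≤ (del n + 1) / (2 * κ) * (C ^ 2 * z ^ (-(del n + 1))) := by
          gcongr
          exact h.sq_div_le_mul_rpow_neg hκ.le hn hC hz
      _ = _ := by ring
  rw [mul_sub]
  exact sub_le_sub_left ((h.damping_le_linearizedRate_mul hκ hn hz₀).trans
    (mul_le_mul_of_nonneg_left hdamp (h.linearizedRate_pos hκ.le (by omega) hz₀.le).le)) _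

lemma isBigO_rescaledProfile_sub (h : IsDecayingProfile κ n η η') (hκ : 0 < κ) (hn : 2 ≤ n)
    {C : ℝ} (hC₀ : C ≠ 0) (hC : Tendsto (rescaledProfile n η) atTop (𝓝 C)) :
    (fun z ↦ rescaledProfile n η z - C) =O[atTop] fun z ↦ z⁻¹ := by
  obtain ⟨B, hB⟩ := h.exists_eventually_scalingDefect_le hκ hn hC₀ hC
  obtain ⟨a, ha⟩ := eventually_atTop.1 <| (eventually_gt_atTop 0).and hB
  choose hpos hB using ha
  have hanti : AntitoneOn (fun z ↦ rescaledProfile n η z + B / z) (Ici a) := by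
    refine antitoneOn_add_div_of_deriv_le (hpos a le_rfl)
      (fun z hz ↦ h.hasDerivAt_rescaledProfile (hpos z hz)) fun z hz ↦ ?_
    have hz₀ := hpos z hz
    calc z ^ (del n - 1) * scalingDefect n η η' z
        ≤ z ^ (del n - 1) * (B * z ^ (-(del n + 1))) := by gcongr; exact hB z hz
      _ = B / z ^ 2 := by
        rw [Real.rpow_neg hz₀.le, Real.rpow_add_one hz₀.ne', Real.rpow_sub_one hz₀.ne']
        field_simp
  have hlim : Tendsto (fun z ↦ rescaledProfile n η z + B / z) atTop (𝓝 C) := by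
    simpa using hC.add (tendsto_id.const_div_atTop B)
  refine .of_bound B ?_
  filter_upwards [eventually_ge_atTop a] with z hz
  have hlower : C ≤ rescaledProfile n η z + B / z := le_of_tendsto hlim
    ((eventually_ge_atTop z).mono fun t ht ↦ hanti hz (hz.trans ht) ht)
  have hupper := h.rescaledProfile_le_of_tendsto hκ.le hn hC (hpos z hz)
  rw [Real.norm_of_nonpos (by linarith), Real.norm_of_nonneg (by have := hpos z hz; positivity),
    ← div_eq_mul_inv]
  linarith

lemma isBigO_linearizedRate_mul_sq_sub (h : IsDecayingProfile κ n η η') (hκ : 0 < κ)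
    (hn : 2 ≤ n) :
    (fun z ↦ linearizedRate κ n η z * z ^ 2 - n * del n * (del n + 1)) =O[atTop] fun z ↦ z⁻¹ := by
  obtain ⟨C, hC₀, hC⟩ := h.exists_tendsto_rescaledProfile hκ hn
  let Φ : ℝ × ℝ → ℝ := fun u ↦
    n * (2 * κ) ^ n * u.1 ^ (n - 1) * (1 + u.2) ^ (n - 1) * (1 + 2 * u.2)
  have hΦ : DifferentiableAt ℝ Φ (C, 0) := by fun_prop
  have hΦ₀ : Φ (C, 0) = n * del n * (del n + 1) := by
    simp only [Φ, add_zero, mul_zero, one_pow, mul_one]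
    rw [mul_assoc, h.limit_rescaledProfile_pow hκ hn hC₀.ne' hC, mul_assoc]
  have hpair : Tendsto (fun z ↦ (rescaledProfile n η z, relativeCorrection κ η z)) atTop
      (𝓝 (C, 0)) := hC.prodMk_nhds h.tendsto_relativeCorrection
  have hdiff : (fun z ↦ (rescaledProfile n η z, relativeCorrection κ η z) - (C, 0)) =O[atTop]
      fun z ↦ z⁻¹ := by
    simpa using (h.isBigO_rescaledProfile_sub hκ hn hC₀.ne' hC).prod_left
      h.isBigO_relativeCorrection
  refine ((hΦ.isBigO_sub.comp_tendsto hpair).trans hdiff).congr' ?_ .rfl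
  filter_upwards [eventually_gt_atTop 0] with z hz
  rw [Function.comp, hΦ₀, linearizedRate_mul_sq hκ.ne' hn hz]

end IsDecayingProfile

theorem homogeneous_solution_growth_general {κ : ℝ} {n : ℕ} {η η' : ℝ → ℝ} (hκ : 0 < κ)
    (hn : 2 ≤ n) (h : IsDecayingProfile κ n η η') :
    ∃ h₁ : ℝ → ℝ, ContDiffOn ℝ 2 h₁ (Ici 0) ∧
      (∀ z ∈ Ici (0 : ℝ),
        derivWithin (derivWithin h₁ (Ici 0)) (Ici 0) z = linearizedRate κ n η z * h₁ z) ∧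
      h₁ 0 = 1 ∧
      derivWithin h₁ (Ici 0) 0 = 0 ∧
      (∀ x ∈ Ici (0 : ℝ), 0 < h₁ x ∧ 1 ≤ h₁ x) ∧
      ∃ d₁ : ℝ, 0 < d₁ ∧ Tendsto (fun x : ℝ ↦ x ^ (-pplus n) * h₁ x) atTop (𝓝 d₁) := by
  have hq := h.continuousOn_linearizedRate
  obtain ⟨h₁, h₁', h₀, h₀', hh, hh', hle, hgrowth⟩ :=
    exists_second_order_solution_rpow_growth (one_lt_pplus hn) hq
      (fun z ↦ h.linearizedRate_pos hκ.le (by omega))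
      (by simpa only [pplus_mul_pplus_sub_one hn] using h.isBigO_linearizedRate_mul_sq_sub hκ hn)
  have hd (z : ℝ) (hz : z ∈ Ici 0) : HasDerivWithinAt h₁ (h₁' z) (Ici 0) z :=
    (hh z hz).hasDerivWithinAt
  have hd' (z : ℝ) (hz : z ∈ Ici 0) :
      HasDerivWithinAt h₁' (linearizedRate κ n η z * h₁ z) (Ici 0) z :=
    (hh' z hz).hasDerivWithinAt
  exact ⟨h₁, contDiffOn_two_Ici_of_hasDerivWithinAt hd hd'
      (hq.mul fun z hz ↦ (hd z hz).continuousWithinAt),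
    fun z hz ↦ derivWithin_derivWithin_Ici_eq hd (hd' z hz) hz, h₀,
    ((hd 0 self_mem_Ici).derivWithin (uniqueDiffOn_Ici 0 0 self_mem_Ici)).trans h₀',
    fun x hx ↦ ⟨zero_lt_one.trans_le (hle x hx), hle x hx⟩, hgrowth⟩

lemma kap_pos : 0 < kap := one_div_pos.2 (Real.sqrt_pos.2 Real.pi_pos)

lemma isDecayingProfile_of_isReactiveProfile {n : ℕ} {η : ℝ → ℝ} (hη : IsReactiveProfile n η) :
    IsDecayingProfile kap n η (derivWithin η (Ici 0)) := by
  obtain ⟨hcont, hpos, hode, -, hlim⟩ := hη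
  have hcont' : ContDiffOn ℝ 1 (derivWithin η (Ici 0)) (Ici 0) :=
    hcont.derivWithin (uniqueDiffOn_Ici 0) one_add_one_eq_two.le
  exact ⟨fun z hz ↦ (hcont.differentiableOn two_ne_zero z hz).hasDerivWithinAt,
    fun z hz ↦ (hcont'.differentiableOn one_ne_zero z hz).hasDerivWithinAt.congr_deriv (hode z hz),
    hpos, hlim⟩

/-- The solution h₁ of h₁'' = q h₁ with h₁(0) = 1, h₁'(0) = 0 exists on all of [0,∞),
satisfies h₁(x) ≥ 1 everywhere (hence is positive), and x^{−p₊} h₁(x) → d₁ > 0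
as x → ∞. -/
theorem homogeneous_solution_growth (n : ℕ) (hn : 4 ≤ n)
    (η : ℝ → ℝ) (hη : IsReactiveProfile n η) :
    ∃ h1 : ℝ → ℝ, ContDiffOn ℝ 2 h1 (Set.Ici 0) ∧
      (∀ z ∈ Set.Ici (0:ℝ),
        derivWithin (derivWithin h1 (Set.Ici 0)) (Set.Ici 0) z = qpot n η z * h1 z) ∧
      h1 0 = 1 ∧
      derivWithin h1 (Set.Ici 0) 0 = 0 ∧
      (∀ x ∈ Set.Ici (0:ℝ), 0 < h1 x ∧ 1 ≤ h1 x) ∧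
      ∃ d1 : ℝ, 0 < d1 ∧
        Filter.Tendsto (fun x : ℝ => x ^ (-(pplus n)) * h1 x) Filter.atTop (nhds d1) :=
  homogeneous_solution_growth_general kap_pos (by omega) (isDecayingProfile_of_isReactiveProfile hη)
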